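/- Let Φ ⊂ ℝ^d be compact and let {Φ_i}_{i=1}^d ⊆ Φ be a barycentric spanner of Φ consisting of linearly independent vectors, and let κ ≥ 1. Then for every T ≥ 1 and every sequence φ_1,...,φ_T ∈ Φ with φ_t = Φ_t for all t ≤ min(d, T): Σ_{t=1}^T min(1, κ² φ_tᵀ(Σ_{i=1}^{t−1} φ_i φ_iᵀ)⁻¹ φ_t) ≤ κ²(2 d log T + d), where a summand is taken equal to 1 whenever Σ_{i=1}^{t−1} φ_i φ_iᵀ is not invertible. -/

import Mathlib

/-!
Write `V_t = ∑_{i<t} φ_i φ_iᵀ` and `x_t = φ_tᵀ V_t⁻¹ φ_t`. Every summand is at most `1`, so the first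
`d` of them contribute at most `d ≤ κ² d`. From `t = d + 1` on, `V_t` is positive definite, and since
`κ ≥ 1`,
`min 1 (κ² x_t) ≤ κ² min 1 x_t ≤ 2 κ² log (1 + x_t) = 2 κ² (log det V_{t+1} - log det V_t)`,
the last step being the matrix determinant lemma. The sum telescopes to
`2 κ² log (det V_{T+1} / det V_{d+1})`.

Let `M` be the matrix whose rows are the spanner. Then `V_{d+1} = Mᵀ M`, while in the coordinates
`φ_t = Mᵀ c_t` one has `V_{T+1} = Mᵀ A M` with `A = ∑_{t ≤ T} c_t c_tᵀ`. So the ratio of determinants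
is exactly `det A`. The spanner property bounds all entries of `c_t` by `1` in absolute value, hence
`tr A ≤ d T`, and AM-GM for the eigenvalues gives `det A ≤ T ^ d`.
-/

open Matrix
open scoped Classical

lemma min_one_le_two_mul_log {x : ℝ} (hx : 0 ≤ x) : min 1 x ≤ 2 * Real.log (1 + x) := by
  have h := Real.one_sub_inv_le_log_of_pos (show (0 : ℝ) < 1 + x by linarith)
  have h2 : min 1 x ≤ 2 * (1 - (1 + x)⁻¹) := by
    have e : 2 * (1 - (1 + x)⁻¹) = 2 * x / (1 + x) := by field_simp; ring
    rw [e, le_div_iff₀ (by linarith)]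
    rcases le_total 1 x with h1 | h1
    · rw [min_eq_left h1]; linarith
    · rw [min_eq_right h1]; nlinarith
  linarith

/-- AM-GM for the eigenvalues of a positive semidefinite matrix, in unnormalised form. -/
lemma det_le_pow_of_trace_le {d : ℕ} {A : Matrix (Fin d) (Fin d) ℝ} (hA : A.PosSemidef)
    {s : ℝ} (hs : 0 < s) (htr : A.trace ≤ d * s) : A.det ≤ s ^ d := by
  have hd := hA.isHermitian.det_eq_prod_eigenvalues
  have ht := hA.isHermitian.trace_eq_sum_eigenvalues
  simp only [RCLike.ofReal_real_eq_id, id_eq] at hd ht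
  set l := hA.isHermitian.eigenvalues
  have hl : ∀ i, 0 ≤ l i := hA.eigenvalues_nonneg
  -- The elementary bound `y ≤ exp (y - 1)` at `y = l i / s`; the exponents sum to at most `0`.
  have h1 : ∏ i, (l i / s) ≤ ∏ i, Real.exp (l i / s - 1) :=
    Finset.prod_le_prod (fun i _ => div_nonneg (hl i) hs.le)
      (fun i _ => by linarith [Real.add_one_le_exp (l i / s - 1)])
  rw [← Real.exp_sum, Finset.prod_div_distrib, Finset.prod_const, Finset.sum_sub_distrib,
    ← Finset.sum_div, ← ht, ← hd] at h1
  have h2 : A.trace / s - ∑ _i : Fin d, (1 : ℝ) ≤ 0 := by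
    have : A.trace / s ≤ d := (div_le_iff₀ hs).2 htr
    simpa using this
  have h3 := h1.trans (Real.exp_le_one_iff.2 h2)
  rw [div_le_one (by positivity)] at h3
  simpa using h3

/-- The matrix determinant lemma for a symmetric rank-one update. -/
lemma det_add_vecMulVec_self {d : ℕ} {V : Matrix (Fin d) (Fin d) ℝ} (hV : IsUnit V.det)
    (u : Fin d → ℝ) :
    (V + vecMulVec u u).det = V.det * (1 + u ⬝ᵥ (V⁻¹ *ᵥ u)) := by
  have h := det_add_replicateCol_mul_replicateRow (ι := Unit) hV u u
  rw [← vecMulVec_eq] at h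
  rw [h, det_unique (n := Unit)]
  simp only [Matrix.add_apply, one_apply_eq, Matrix.mul_assoc]
  rfl

lemma posSemidef_vecMulVec_self {d : ℕ} (u : Fin d → ℝ) : (vecMulVec u u).PosSemidef := by
  simpa using posSemidef_vecMulVec_self_star u

/-- Congruence by `M` turns the Gram sum of the coordinates into the Gram sum of the vectors. -/
lemma sum_vecMulVec_vecMul {d : ℕ} (M : Matrix (Fin d) (Fin d) ℝ) (s : Finset ℕ)
    (c : ℕ → Fin d → ℝ) :
    ∑ t ∈ s, vecMulVec (c t ᵥ* M) (c t ᵥ* M) = Mᵀ * (∑ t ∈ s, vecMulVec (c t) (c t)) * M := by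
  rw [Finset.mul_sum, Finset.sum_mul]
  refine Finset.sum_congr rfl fun t _ => ?_
  rw [mul_vecMulVec, vecMulVec_mul, mulVec_transpose]

/-- **Elliptical potential lemma for the generalized linear feature model.**
Let `Φ ⊂ ℝ^d` be compact with a barycentric spanner `{Φ_i}_{i=1}^d ⊆ Φ` of linearly
independent vectors, and let `κ ≥ 1`.  Then for every `T ≥ 1` and every sequence
`φ_1, ..., φ_T ∈ Φ` with `φ_t = Φ_t` for `t ≤ min d T`,
`∑_{t=1}^T min(1, κ² φ_tᵀ (∑_{i<t} φ_i φ_iᵀ)⁻¹ φ_t) ≤ κ² (2 d log T + d)`,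
where a summand is taken to be `1` whenever `∑_{i<t} φ_i φ_iᵀ` is not invertible. -/
theorem stmt_15 (d : ℕ) (κ : ℝ) (hκ : 1 ≤ κ)
    (Φ : Set (Fin d → ℝ)) (hcomp : IsCompact Φ)
    (Φv : Fin d → Fin d → ℝ)
    (hΦv_mem : ∀ i, Φv i ∈ Φ)
    (hΦv_li : LinearIndependent ℝ Φv)
    (hspanner : ∀ φ ∈ Φ, ∃ c : Fin d → ℝ, (∀ i, |c i| ≤ 1) ∧ φ = ∑ i, c i • Φv i)
    (T : ℕ) (hT : 1 ≤ T)
    (φ : ℕ → Fin d → ℝ)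
    (hφ_mem : ∀ t, 1 ≤ t → t ≤ T → φ t ∈ Φ)
    (hφ_init : ∀ t (h1 : 1 ≤ t) (h2 : t ≤ min d T), φ t = Φv ⟨t - 1, by omega⟩) :
    ∑ t ∈ Finset.Icc 1 T,
        (if IsUnit (∑ i ∈ Finset.Ico 1 t, Matrix.vecMulVec (φ i) (φ i)).det
          then min 1
            (κ ^ 2 * (φ t ⬝ᵥ ((∑ i ∈ Finset.Ico 1 t, Matrix.vecMulVec (φ i) (φ i))⁻¹ *ᵥ φ t)))
          else 1)
      ≤ κ ^ 2 * (2 * d * Real.log T + d) := by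
  set V : ℕ → Matrix (Fin d) (Fin d) ℝ :=
    fun t => ∑ i ∈ Finset.Ico 1 t, vecMulVec (φ i) (φ i) with hV
  set f : ℕ → ℝ := fun t => if IsUnit (V t).det
    then min 1 (κ ^ 2 * (φ t ⬝ᵥ ((V t)⁻¹ *ᵥ φ t))) else 1 with hf
  change ∑ t ∈ Finset.Icc 1 T, f t ≤ _
  have hκ2 : 1 ≤ κ ^ 2 := one_le_pow₀ hκ
  have hf1 : ∀ t, f t ≤ 1 := by
    intro t
    simp only [hf]
    split_ifs
    exacts [min_le_left _ _, le_rfl]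
  have hsum1 : ∀ n : ℕ, ∑ t ∈ Finset.Icc 1 n, f t ≤ n := by
    intro n
    refine (Finset.sum_le_sum fun t _ => hf1 t).trans ?_
    simp
  have hlogT : 0 ≤ Real.log T := Real.log_natCast_nonneg T
  have hd0 : (0 : ℝ) ≤ d := Nat.cast_nonneg d
  rcases le_total T d with hTd | hdT
  · have h1 := hsum1 T
    have h2 : (T : ℝ) ≤ d := by exact_mod_cast hTd
    have h3 : 0 ≤ κ ^ 2 * (2 * d * Real.log T) := by positivity
    nlinarith
  set M : Matrix (Fin d) (Fin d) ℝ := Matrix.of Φv with hM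
  have hMu : IsUnit M := linearIndependent_rows_iff_isUnit.1 hΦv_li
  have hMdet : M.det ≠ 0 := ((isUnit_iff_isUnit_det M).1 hMu).ne_zero
  have hVd : V (d + 1) = Mᵀ * M := by
    ext a b
    simp only [hV, Matrix.sum_apply, vecMulVec_apply, Matrix.mul_apply, transpose_apply, hM, of_apply]
    rw [Finset.sum_Ico_eq_sum_range, Nat.add_sub_cancel, Finset.sum_range]
    refine Finset.sum_congr rfl fun i _ => ?_
    have := hφ_init (1 + i) (by omega) (le_min (by omega) (by omega))
    rw [this]
    simp
  have hVd_pos : (V (d + 1)).PosDef := by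
    rw [hVd]
    have := PosDef.conjTranspose_mul_self M (mulVec_injective_iff_isUnit.2 hMu)
    simpa [conjTranspose_eq_transpose_of_trivial] using this
  have hVsucc : ∀ n, V (n + 1 + 1) = V (n + 1) + vecMulVec (φ (n + 1)) (φ (n + 1)) := by
    intro n
    exact Finset.sum_Ico_succ_top (by omega) _
  have hmain : ∀ n, d ≤ n → (V (n + 1)).PosDef ∧ ∑ t ∈ Finset.Icc 1 n, f t ≤
      d + κ ^ 2 * (2 * (Real.log (V (n + 1)).det - Real.log (V (d + 1)).det)) := by
    intro n hn
    induction n, hn using Nat.le_induction with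
    | base => exact ⟨hVd_pos, by simpa using hsum1 d⟩
    | succ n hn ih =>
      obtain ⟨hp, hs⟩ := ih
      refine ⟨?_, ?_⟩
      · rw [hVsucc]
        exact hp.add_posSemidef (posSemidef_vecMulVec_self _)
      have hu : IsUnit (V (n + 1)).det := hp.det_pos.ne'.isUnit
      have hx : 0 ≤ φ (n + 1) ⬝ᵥ ((V (n + 1))⁻¹ *ᵥ φ (n + 1)) := by
        simpa using hp.inv.posSemidef.dotProduct_mulVec_nonneg (φ (n + 1))
      rw [Finset.sum_Icc_succ_top (by omega), hVsucc, det_add_vecMulVec_self hu]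
      have hfn : f (n + 1) = min 1 (κ ^ 2 * (φ (n + 1) ⬝ᵥ ((V (n + 1))⁻¹ *ᵥ φ (n + 1)))) :=
        if_pos hu
      rw [hfn]
      set x := φ (n + 1) ⬝ᵥ ((V (n + 1))⁻¹ *ᵥ φ (n + 1))
      rw [Real.log_mul hp.det_pos.ne' (by positivity)]
      have h1 : min 1 (κ ^ 2 * x) ≤ κ ^ 2 * min 1 x := by
        rw [mul_min_of_nonneg _ _ (by positivity), mul_one]
        exact min_le_min_right _ hκ2
      have h2 : κ ^ 2 * min 1 x ≤ κ ^ 2 * (2 * Real.log (1 + x)) :=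
        mul_le_mul_of_nonneg_left (min_one_le_two_mul_log hx) (by positivity)
      linarith
  obtain ⟨hpT, hsT⟩ := hmain T hdT
  -- Coordinates with respect to the spanner, extended by `0` outside `1 ≤ t ≤ T`.
  have hc : ∀ t, ∃ c : Fin d → ℝ, (∀ i, |c i| ≤ 1) ∧ (1 ≤ t → t ≤ T → φ t = c ᵥ* M) := by
    intro t
    by_cases ht : 1 ≤ t ∧ t ≤ T
    · obtain ⟨c, h1, h2⟩ := hspanner _ (hφ_mem t ht.1 ht.2)
      refine ⟨c, h1, fun _ _ => ?_⟩
      rw [h2, vecMul_eq_sum]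
      rfl
    · exact ⟨0, by simp, fun h1 h2 => absurd ⟨h1, h2⟩ ht⟩
  choose c hc1 hc2 using hc
  set A : Matrix (Fin d) (Fin d) ℝ := ∑ t ∈ Finset.Ico 1 (T + 1), vecMulVec (c t) (c t) with hA
  have hVT : V (T + 1) = Mᵀ * A * M := by
    rw [hA, ← sum_vecMulVec_vecMul]
    refine Finset.sum_congr rfl fun t ht => ?_
    rw [Finset.mem_Ico] at ht
    rw [hc2 t ht.1 (by omega)]
  have hApsd : A.PosSemidef := posSemidef_sum _ fun t _ => posSemidef_vecMulVec_self _
  have hAtr : A.trace ≤ d * T := by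
    have hdiag : ∀ j, A j j ≤ T := by
      intro j
      simp only [hA, Matrix.sum_apply, vecMulVec_apply]
      refine (Finset.sum_le_sum (g := fun _ => (1 : ℝ)) fun t _ => ?_).trans (by simp)
      rw [← sq]
      exact (sq_le_one_iff_abs_le_one _).2 (hc1 t j)
    calc A.trace = ∑ j, A j j := rfl
      _ ≤ ∑ _j : Fin d, (T : ℝ) := Finset.sum_le_sum fun j _ => hdiag j
      _ = d * T := by simp
  have hTpos : (0 : ℝ) < T := by exact_mod_cast hT
  have hAdet : A.det ≤ (T : ℝ) ^ d := det_le_pow_of_trace_le hApsd hTpos hAtr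
  have hdet : (V (T + 1)).det = (V (d + 1)).det * A.det := by
    rw [hVT, hVd]
    simp only [det_mul, det_transpose]
    ring
  have hApos : 0 < A.det := by
    have := hpT.det_pos
    rw [hdet] at this
    exact (mul_pos_iff_of_pos_left hVd_pos.det_pos).1 this
  have hlogA : Real.log A.det ≤ d * Real.log T := by
    rw [← Real.log_pow]
    exact Real.log_le_log hApos hAdet
  rw [hdet, Real.log_mul hVd_pos.det_pos.ne' hApos.ne', add_sub_cancel_left] at hsT
  have h1 : κ ^ 2 * (2 * Real.log A.det) ≤ κ ^ 2 * (2 * (d * Real.log T)) := by gcongr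
  have h2 : (d : ℝ) ≤ κ ^ 2 * d := le_mul_of_one_le_left hd0 hκ2
  linarith
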